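/- arXiv:2101.06045 — 2 statements merged into one kernel-verified Lean document; each statement's English description precedes it below -/
import Mathlib

section
/- The entire function g determined by g(z) = −(12/z)(√z sin(√z) + 2cos(√z) − 2) for z ≠ 0 and g(0) = 0 belongs to the class S*_e, and the entire function h determined by h(z) = (12/z)(√z sinh(√z) − 2cosh(√z) + 2) for z ≠ 0 and h(0) = 0 belongs to the class S*_e. -/
/-!
For `f = z + ∑_{n ≥ 2} aₙ zⁿ` on the unit disk, comparing the series of `z f' - f` and of `f - z`
term by term gives `|z f' - f| + ρ |f - z| ≤ |z|² ∑_{n ≥ 2} (n - 1 + ρ) |aₙ|`. If this last sum is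
at most `ρ`, then `|z f' - f| < ρ |z| - ρ |f - z| ≤ ρ |f|`, so `z f' / f` lies within `ρ` of `1`.
The disk of radius `ρ = 1 - e⁻¹` about `1` lies in `exp 𝔻`, because
`|log (1 - u)| ≤ -log (1 - |u|) < 1` for `|u| < 1 - e⁻¹`.

The two functions of the theorem are `∑ ± 24 n / (2 n + 2)! zⁿ`, and these coefficients decay so
fast that the sum above is far below `1 - e⁻¹`.
-/

open Complex Set

def unitDisk : Set ℂ := Metric.ball 0 1

def expD : Set ℂ := Complex.exp '' unitDisk

/-- The generalized and normalized Bessel function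
`φ_{κ,c}(z) = ∑ ((-c/4)^n / ((κ)_n n!)) zⁿ`. -/
noncomputable def besselPhi (κ c : ℂ) (z : ℂ) : ℂ :=
  ∑' n : ℕ, ((-c / 4) ^ n / ((ascPochhammer ℂ n).eval κ * (n.factorial : ℂ))) * z ^ n

/-- Membership in the class `S*_e` of exponential starlike functions. -/
def IsSe (f : ℂ → ℂ) : Prop :=
  AnalyticOnNhd ℂ f unitDisk ∧ f 0 = 0 ∧ deriv f 0 = 1 ∧
    ∀ z ∈ unitDisk \ {0}, f z ≠ 0 ∧ z * deriv f z / f z ∈ expD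

theorem norm_log_one_sub_le {z : ℂ} (hz : ‖z‖ < 1) : ‖log (1 - z)‖ ≤ -Real.log (1 - ‖z‖) := by
  have hreal := Real.hasSum_pow_div_log_of_abs_lt_one ((abs_norm z).trans_lt hz)
  rw [← norm_neg]
  refine (hasSum_taylorSeries_neg_log' hz).norm_le_of_bounded hreal fun n => ?_
  rw [norm_div, norm_pow, ← Nat.cast_add_one, norm_natCast, Nat.cast_add_one]

theorem ball_one_subset_expD : Metric.ball 1 (1 - Real.exp (-1)) ⊆ expD := by
  intro w hw
  have hdist : ‖1 - w‖ < 1 - Real.exp (-1) := by rwa [← dist_eq_norm, ← Metric.mem_ball']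
  have hlt : ‖1 - w‖ < 1 := hdist.trans (sub_lt_self 1 (Real.exp_pos _))
  have hw0 : w ≠ 0 := by
    rintro rfl
    simp at hlt
  refine ⟨log w, mem_ball_zero_iff.2 ?_, exp_log hw0⟩
  calc ‖log w‖ = ‖log (1 - (1 - w))‖ := by rw [sub_sub_cancel]
    _ ≤ -Real.log (1 - ‖1 - w‖) := norm_log_one_sub_le hlt
    _ < 1 := neg_lt.1 ((Real.lt_log_iff_exp_lt (sub_pos.2 hlt)).2 (by linarith))

section PowerSeries

variable {a : ℕ → ℂ} {f : ℂ → ℂ} {R : ℝ}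

theorem norm_mul_pow_le_of_mem_ball {z : ℂ} (hz : z ∈ Metric.ball 0 R) (n : ℕ) :
    ‖a n * z ^ n‖ ≤ ‖a n‖ * R ^ n := by
  rw [norm_mul, norm_pow]
  gcongr
  exact (mem_ball_zero_iff.1 hz).le

theorem differentiableOn_of_hasSum_pow (ha : Summable fun n => ‖a n‖ * R ^ n)
    (hf : ∀ z ∈ Metric.ball 0 R, HasSum (fun n => a n * z ^ n) (f z)) :
    DifferentiableOn ℂ f (Metric.ball 0 R) :=
  (differentiableOn_tsum_of_summable_norm ha (fun n => by fun_prop) Metric.isOpen_ball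
    fun n _ hw => norm_mul_pow_le_of_mem_ball hw n).congr fun z hz => (hf z hz).tsum_eq.symm

theorem hasSum_deriv_of_hasSum_pow (ha : Summable fun n => ‖a n‖ * R ^ n)
    (hf : ∀ z ∈ Metric.ball 0 R, HasSum (fun n => a n * z ^ n) (f z)) {z : ℂ}
    (hz : z ∈ Metric.ball 0 R) :
    HasSum (fun n => a n * (n * z ^ (n - 1))) (deriv f z) := by
  have hEq : EqOn f (fun w => ∑' n, a n * w ^ n) (Metric.ball 0 R) :=
    fun w hw => (hf w hw).tsum_eq.symm
  have hsum := hasSum_deriv_of_summable_norm ha (fun n => by fun_prop) Metric.isOpen_ball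
    (fun n _ hw => norm_mul_pow_le_of_mem_ball hw n) hz
  rw [hEq.deriv Metric.isOpen_ball hz]
  simpa only [deriv_const_mul_field, deriv_pow_field] using hsum

theorem norm_le_pow_mul_tsum_norm {z S : ℂ} {k : ℕ} (hz : ‖z‖ ≤ 1) (ha : Summable fun n => ‖a n‖)
    (h : HasSum (fun n => a n * z ^ (n + k)) S) : ‖S‖ ≤ ‖z‖ ^ k * ∑' n, ‖a n‖ := by
  refine h.norm_le_of_bounded (ha.hasSum.mul_left _) fun n => ?_
  rw [norm_mul, norm_pow, mul_comm]
  exact mul_le_mul_of_nonneg_right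
    (pow_le_pow_of_le_one (norm_nonneg z) hz (Nat.le_add_left k n)) (norm_nonneg _)

end PowerSeries

section CoefficientCriterion

variable {a : ℕ → ℂ} {f : ℂ → ℂ} {ρ : ℝ}

theorem summable_norm_of_summable_weighted (hρ : 0 ≤ ρ)
    (hs : Summable fun n : ℕ => (n + 1 + ρ) * ‖a (n + 2)‖) : Summable fun n => ‖a n‖ := by
  refine (summable_nat_add_iff 2).1 (hs.of_nonneg_of_le (fun n => norm_nonneg _) fun n => ?_)
  exact le_mul_of_one_le_left (norm_nonneg _) (by linarith [n.cast_nonneg (α := ℝ)])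

theorem norm_mul_deriv_sub_self_add_le (hρ : 0 ≤ ρ) (ha0 : a 0 = 0) (ha1 : a 1 = 1)
    (hs : Summable fun n : ℕ => (n + 1 + ρ) * ‖a (n + 2)‖)
    (hf : ∀ z ∈ unitDisk, HasSum (fun n => a n * z ^ n) (f z)) {z : ℂ} (hz : z ∈ unitDisk) :
    ‖z * deriv f z - f z‖ + ρ * ‖f z - z‖ ≤
      ‖z‖ ^ 2 * ∑' n : ℕ, (n + 1 + ρ) * ‖a (n + 2)‖ := by
  have ha := summable_norm_of_summable_weighted hρ hs
  have ha_shift : Summable fun n => ‖a (n + 2)‖ := (summable_nat_add_iff 2).2 ha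
  have ha_mul : Summable fun n : ℕ => (n + 1) * ‖a (n + 2)‖ :=
    (hs.sub (ha_shift.mul_left ρ)).congr fun n => by ring
  have hnorm_mul (n : ℕ) : ‖(n + 1) * a (n + 2)‖ = (n + 1) * ‖a (n + 2)‖ := by
    rw [norm_mul, ← Nat.cast_add_one, Complex.norm_natCast, Nat.cast_add_one]
  have hz1 : ‖z‖ ≤ 1 := (mem_ball_zero_iff.1 hz).le
  have hsub : HasSum (fun n => a (n + 2) * z ^ (n + 2)) (f z - z) := by
    simpa [Finset.sum_range_succ, ha0, ha1] using (hasSum_nat_add_iff' 2).2 (hf z hz)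
  have hderiv : HasSum (fun n : ℕ => (n + 1) * a (n + 2) * z ^ (n + 2))
      (z * deriv f z - f z) := by
    have h := ((hasSum_deriv_of_hasSum_pow (by simpa using ha) hf hz).mul_left z).sub (hf z hz)
    convert! (hasSum_nat_add_iff' 2).2 h using 1
    · funext n
      push_cast
      ring
    · simp [Finset.sum_range_succ, ha0, mul_comm]
  have hsub_le : ‖f z - z‖ ≤ ‖z‖ ^ 2 * ∑' n, ‖a (n + 2)‖ :=
    norm_le_pow_mul_tsum_norm hz1 ha_shift hsub
  have hderiv_le : ‖z * deriv f z - f z‖ ≤ ‖z‖ ^ 2 * ∑' n : ℕ, (n + 1) * ‖a (n + 2)‖ := by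
    simpa only [hnorm_mul] using
      norm_le_pow_mul_tsum_norm hz1 (by simpa only [hnorm_mul] using ha_mul) hderiv
  calc _ ≤ ‖z‖ ^ 2 * ∑' n : ℕ, (n + 1) * ‖a (n + 2)‖ +
        ρ * (‖z‖ ^ 2 * ∑' n, ‖a (n + 2)‖) := by gcongr
    _ = ‖z‖ ^ 2 * ∑' n : ℕ, (n + 1 + ρ) * ‖a (n + 2)‖ := by
      simp only [add_mul _ ρ]
      rw [ha_mul.tsum_add (ha_shift.mul_left ρ), tsum_mul_left]
      ring

theorem norm_mul_deriv_sub_self_lt (hρ : 0 < ρ) (ha0 : a 0 = 0) (ha1 : a 1 = 1)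
    (hs : Summable fun n : ℕ => (n + 1 + ρ) * ‖a (n + 2)‖)
    (hle : ∑' n : ℕ, (n + 1 + ρ) * ‖a (n + 2)‖ ≤ ρ)
    (hf : ∀ z ∈ unitDisk, HasSum (fun n => a n * z ^ n) (f z)) {z : ℂ} (hz : z ∈ unitDisk)
    (hz0 : z ≠ 0) : ‖z * deriv f z - f z‖ < ρ * ‖f z‖ := by
  have hz_sq : ‖z‖ ^ 2 < ‖z‖ :=
    pow_lt_self_of_lt_one₀ (norm_pos_iff.2 hz0) (mem_ball_zero_iff.1 hz) one_lt_two
  have hz_le : ‖z‖ ≤ ‖f z‖ + ‖f z - z‖ := by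
    simpa using norm_sub_le (f z) (f z - z)
  have hstrict : ‖z * deriv f z - f z‖ + ρ * ‖f z - z‖ < ρ * ‖f z‖ + ρ * ‖f z - z‖ :=
    calc _ ≤ ‖z‖ ^ 2 * ∑' n : ℕ, (n + 1 + ρ) * ‖a (n + 2)‖ :=
          norm_mul_deriv_sub_self_add_le hρ.le ha0 ha1 hs hf hz
      _ ≤ ‖z‖ ^ 2 * ρ := by gcongr
      _ < ‖z‖ * ρ := by gcongr
      _ ≤ (‖f z‖ + ‖f z - z‖) * ρ := by gcongr
      _ = ρ * ‖f z‖ + ρ * ‖f z - z‖ := by ring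
  exact lt_of_add_lt_add_right hstrict

theorem isSe_of_hasSum_pow (ha0 : a 0 = 0) (ha1 : a 1 = 1)
    (hs : Summable fun n : ℕ => (n + 1 + (1 - Real.exp (-1))) * ‖a (n + 2)‖)
    (hle : ∑' n : ℕ, (n + 1 + (1 - Real.exp (-1))) * ‖a (n + 2)‖ ≤ 1 - Real.exp (-1))
    (hf : ∀ z ∈ unitDisk, HasSum (fun n => a n * z ^ n) (f z)) : IsSe f := by
  have hρ : 0 < 1 - Real.exp (-1) := by linarith [Real.exp_neg_one_lt_half]
  have ha : Summable fun n => ‖a n‖ * 1 ^ n := by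
    simpa using summable_norm_of_summable_weighted hρ.le hs
  have h0 : (0 : ℂ) ∈ unitDisk := Metric.mem_ball_self one_pos
  refine ⟨(differentiableOn_of_hasSum_pow ha hf).analyticOnNhd Metric.isOpen_ball, ?_, ?_, ?_⟩
  · refine (hf 0 h0).unique ?_
    simpa [ha0] using hasSum_single (f := fun n => a n * 0 ^ n) 0 (by simp +contextual)
  · refine (hasSum_deriv_of_hasSum_pow ha hf h0).unique ?_
    have hterm (n : ℕ) (hn : n ≠ 1) : a n * (n * 0 ^ (n - 1)) = 0 := by
      rcases n with _ | _ | n <;> simp_all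
    simpa [ha1] using hasSum_single 1 hterm
  · rintro z ⟨hz, hz0⟩
    have hlt := norm_mul_deriv_sub_self_lt hρ ha0 ha1 hs hle hf hz hz0
    have hfz : 0 < ‖f z‖ := pos_of_mul_pos_right ((norm_nonneg _).trans_lt hlt) hρ.le
    refine ⟨norm_pos_iff.1 hfz, ball_one_subset_expD ?_⟩
    rwa [mem_ball_iff_norm, div_sub_one (norm_pos_iff.1 hfz), norm_div, div_lt_iff₀ hfz]

end CoefficientCriterion

/-- The Taylor coefficients of the Libera transform `L[z𝓘_{3/2}]`, where `L[F] z = (2/z) ∫₀ᶻ F`;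
those of `L[z𝒥_{3/2}]` differ only in sign. -/
noncomputable def liberaCoeff (n : ℕ) : ℝ := 24 * n / (2 * n + 2).factorial

theorem liberaCoeff_nonneg (n : ℕ) : 0 ≤ liberaCoeff n := by
  unfold liberaCoeff
  positivity

theorem liberaCoeff_zero : liberaCoeff 0 = 0 := by
  simp [liberaCoeff]

theorem liberaCoeff_one : liberaCoeff 1 = 1 := by
  norm_num [liberaCoeff, Nat.factorial]

theorem mul_liberaCoeff_le (n : ℕ) : n * liberaCoeff n ≤ 6 / (2 * n).factorial := by
  have hfact : ((2 * n + 2).factorial : ℝ) = (2 * n + 2) * (2 * n + 1) * (2 * n).factorial := by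
    rw [Nat.factorial_succ, Nat.factorial_succ]
    push_cast
    ring
  rw [liberaCoeff, hfact, ← mul_div_assoc, div_le_div_iff₀ (by positivity) (by positivity)]
  have hpoly : n * (24 * n) ≤ 6 * ((2 * n + 2) * (2 * n + 1) : ℝ) := by
    nlinarith [n.cast_nonneg (α := ℝ)]
  calc _ ≤ 6 * ((2 * n + 2) * (2 * n + 1) : ℝ) * (2 * n).factorial := by gcongr
    _ = _ := by ring

theorem add_two_mul_liberaCoeff_le (n : ℕ) :
    (n + 2) * liberaCoeff (n + 2) ≤ 1 / 4 * (1 / 25) ^ n := by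
  have hfact : (24 * 25 ^ n : ℝ) ≤ (2 * (n + 2)).factorial := by
    have h := Nat.factorial_mul_pow_le_factorial (m := 4) (n := 2 * n)
    rw [pow_mul, show 4 + 2 * n = 2 * (n + 2) by ring] at h
    exact_mod_cast h
  calc (n + 2) * liberaCoeff (n + 2) ≤ 6 / (2 * (n + 2)).factorial := by
        exact_mod_cast mul_liberaCoeff_le (n + 2)
    _ ≤ 6 / (24 * 25 ^ n) := by gcongr
    _ = 1 / 4 * (1 / 25) ^ n := by
      rw [one_div_pow]
      field_simp
      norm_num

theorem isSe_of_norm_le_liberaCoeff {a : ℕ → ℂ} {f : ℂ → ℂ} (ha : ∀ n, ‖a n‖ ≤ liberaCoeff n)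
    (ha1 : a 1 = 1) (hf : ∀ z ∈ unitDisk, HasSum (fun n => a n * z ^ n) (f z)) : IsSe f := by
  have ha0 : a 0 = 0 := norm_le_zero_iff.1 ((ha 0).trans_eq liberaCoeff_zero)
  have hgeom : HasSum (fun n : ℕ => (1 / 4 * (1 / 25) ^ n : ℝ)) (1 / 4 * (1 - 1 / 25)⁻¹) :=
    (hasSum_geometric_of_lt_one (by norm_num) (by norm_num)).mul_left _
  have hweight (n : ℕ) : (0 : ℝ) ≤ n + 1 + (1 - Real.exp (-1)) := by
    linarith [n.cast_nonneg (α := ℝ), Real.exp_neg_one_lt_half]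
  have hterm (n : ℕ) :
      (n + 1 + (1 - Real.exp (-1))) * ‖a (n + 2)‖ ≤ 1 / 4 * (1 / 25) ^ n :=
    calc _ ≤ (n + 2) * liberaCoeff (n + 2) := by
          refine mul_le_mul ?_ (ha (n + 2)) (norm_nonneg _) (by positivity)
          linarith [Real.exp_pos (-1)]
      _ ≤ 1 / 4 * (1 / 25) ^ n := add_two_mul_liberaCoeff_le n
  have hs : Summable fun n : ℕ => (n + 1 + (1 - Real.exp (-1))) * ‖a (n + 2)‖ :=
    hgeom.summable.of_nonneg_of_le (fun n => mul_nonneg (hweight n) (norm_nonneg _)) hterm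
  refine isSe_of_hasSum_pow ha0 ha1 hs ?_ hf
  calc _ ≤ (1 / 4 * (1 - 1 / 25)⁻¹ : ℝ) := hasSum_le hterm hs.hasSum hgeom
    _ ≤ 1 / 2 := by norm_num
    _ ≤ 1 - Real.exp (-1) := by linarith [Real.exp_neg_one_lt_half]

theorem hasSum_liberaCoeff_sinh_cosh (s : ℂ) :
    HasSum (fun n => liberaCoeff n * (s ^ 2) ^ (n + 1))
      (12 * (s * sinh s - 2 * cosh s + 2)) := by
  have hcosh : HasSum (fun n => s ^ (2 * (n + 1)) / (2 * (n + 1)).factorial) (cosh s - 1) := by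
    simpa using (hasSum_nat_add_iff' 1).2 (hasSum_cosh s)
  convert! (((hasSum_sinh s).mul_left s).sub (hcosh.mul_left 2)).mul_left 12 using 1
  · funext n
    have hfact : ((2 * n + 2).factorial : ℂ) = (2 * n + 2) * (2 * n + 1).factorial := by
      exact_mod_cast Nat.factorial_succ (2 * n + 1)
    have hfact_ne : ((2 * n + 1).factorial : ℂ) ≠ 0 := by
      exact_mod_cast Nat.factorial_ne_zero (2 * n + 1)
    rw [liberaCoeff, ← pow_mul, mul_add_one 2 n]
    push_cast
    rw [hfact]
    field_simp
    ring
  · ring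

theorem hasSum_liberaCoeff_sin_cos (s : ℂ) :
    HasSum (fun n => (-1) ^ (n + 1) * liberaCoeff n * (s ^ 2) ^ (n + 1))
      (-(12 * (s * sin s + 2 * cos s - 2))) := by
  convert! hasSum_liberaCoeff_sinh_cosh (s * I) using 1
  · funext n
    rw [mul_pow s I, I_sq, mul_neg_one, neg_pow (s ^ 2)]
    ring
  · rw [sinh_mul_I, cosh_mul_I]
    linear_combination -12 * s * sin s * I_sq

theorem hasSum_pow_ite_div {a : ℕ → ℂ} {z S : ℂ} (ha0 : a 0 = 0)
    (h : HasSum (fun n => a n * z ^ (n + 1)) S) :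
    HasSum (fun n => a n * z ^ n) (if z = 0 then 0 else S / z) := by
  split_ifs with hz
  · convert! hasSum_zero using 2 with n
    rcases n with _ | n <;> simp [ha0, hz]
  · convert! h.div_const z using 2 with n
    rw [pow_succ, ← mul_assoc, mul_div_cancel_right₀ _ hz]

theorem libera_sin_sqrt_exponential_starlike :
    IsSe (fun z => if z = 0 then 0 else
      -(12 / z) * (z ^ ((1 : ℂ) / 2) * Complex.sin (z ^ ((1 : ℂ) / 2)) +
        2 * Complex.cos (z ^ ((1 : ℂ) / 2)) - 2)) ∧
      IsSe (fun z => if z = 0 then 0 else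
        (12 / z) * (z ^ ((1 : ℂ) / 2) * Complex.sinh (z ^ ((1 : ℂ) / 2)) -
          2 * Complex.cosh (z ^ ((1 : ℂ) / 2)) + 2)) := by
  have hsqrt (z : ℂ) : (z ^ ((1 : ℂ) / 2)) ^ 2 = z := by
    rw [one_div]
    exact cpow_ofNat_inv_pow z 2
  constructor
  · refine isSe_of_norm_le_liberaCoeff (a := fun n => (-1) ^ (n + 1) * liberaCoeff n)
      (fun n => by simp [abs_of_nonneg (liberaCoeff_nonneg n)]) (by simp [liberaCoeff_one])
      fun z _ => ?_
    have h := hasSum_liberaCoeff_sin_cos (z ^ ((1 : ℂ) / 2))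
    rw [hsqrt] at h
    simpa only [mul_div_right_comm, neg_div, neg_mul] using
      hasSum_pow_ite_div (by simp [liberaCoeff_zero]) h
  · refine isSe_of_norm_le_liberaCoeff (a := fun n => liberaCoeff n)
      (fun n => by simp [abs_of_nonneg (liberaCoeff_nonneg n)]) (by simp [liberaCoeff_one])
      fun z _ => ?_
    have h := hasSum_liberaCoeff_sinh_cosh (z ^ ((1 : ℂ) / 2))
    rw [hsqrt] at h
    simpa only [mul_div_right_comm] using hasSum_pow_ite_div (by simp [liberaCoeff_zero]) h
end

section
/- Let ν ∈ ℝ with ν ≥ 17/12. Then the functions h₁(z) = z φ_{ν+1,1}(z²) and h₂(z) = z φ_{ν+1,−1}(z²), which equal 2^ν Γ(ν+1) z^{1−ν} J_ν(z) and 2^ν Γ(ν+1) z^{1−ν} I_ν(z) respectively, both belong to the class S*_e. -/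
/-!
The series `-log (1 - v) = ∑ vⁿ / n` gives `|log (1 + v)| ≤ -log (1 - |v|)`, which is less than `1`
as soon as `|v| < 1 - e⁻¹`. For `f(z) = z g(zᵐ)` one has `z f'(z) / f(z) = 1 + m w g'(w) / g(w)`
with `w = zᵐ`, so `f` belongs to `S*_e` whenever `m |w g'(w)| < (1 - e⁻¹) |g(w)|` on the disk. If
`g(w) = ∑ aₙ wⁿ` with `a₀ = 1` and `|aₙ| ≤ uₙ`, then `|w g'(w)| ≤ ∑ n uₙ` and
`|g(w)| ≥ 2 - ∑ uₙ`. Since `|κ + n| ≥ |κ|` for `Re κ ≥ -1/2`, the coefficients of `φ_{κ,c}` are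
dominated by `qⁿ / n!` with `q = |c| / (4 |κ|)`, and these two sums become `q e^q` and `e^q`.
-/

open Complex Set

lemma mem_unitDisk {z : ℂ} : z ∈ unitDisk ↔ ‖z‖ < 1 := mem_ball_zero_iff

lemma isOpen_unitDisk : IsOpen unitDisk := Metric.isOpen_ball

lemma pow_mem_unitDisk {z : ℂ} (hz : z ∈ unitDisk) {m : ℕ} (hm : m ≠ 0) : z ^ m ∈ unitDisk := by
  rw [mem_unitDisk, norm_pow]
  exact pow_lt_one₀ (norm_nonneg z) (mem_unitDisk.mp hz) hm

lemma norm_log_one_add_le_neg_log_one_sub_norm {v : ℂ} (hv : ‖v‖ < 1) :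
    ‖Complex.log (1 + v)‖ ≤ -Real.log (1 - ‖v‖) := by
  have hlog := hasSum_taylorSeries_neg_log' (z := -v) (by rwa [norm_neg])
  rw [sub_neg_eq_add] at hlog
  rw [← norm_neg]
  refine hlog.norm_le_of_bounded
    (Real.hasSum_pow_div_log_of_abs_lt_one (by rwa [abs_norm])) fun n => ?_
  rw [norm_div, norm_pow, norm_neg, ← Nat.cast_add_one, norm_natCast, Nat.cast_add_one]

lemma one_add_mem_expD {v : ℂ} (hv : ‖v‖ < 1 - Real.exp (-1)) : 1 + v ∈ expD := by
  have hv_one : ‖v‖ < 1 := hv.trans (sub_lt_self 1 (Real.exp_pos _))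
  refine ⟨Complex.log (1 + v), mem_unitDisk.mpr ?_, Complex.exp_log fun h0 => ?_⟩
  · calc ‖Complex.log (1 + v)‖ ≤ -Real.log (1 - ‖v‖) :=
          norm_log_one_add_le_neg_log_one_sub_norm hv_one
      _ < 1 := neg_lt.mp ((Real.lt_log_iff_exp_lt (by linarith)).mpr (by linarith))
  · rw [← neg_eq_of_add_eq_zero_right h0, norm_neg, norm_one] at hv_one
    exact lt_irrefl 1 hv_one

lemma hasDerivAt_mul_comp_pow {g : ℂ → ℂ} {m : ℕ} {z : ℂ} (hg : DifferentiableAt ℂ g (z ^ m)) :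
    HasDerivAt (fun x => x * g (x ^ m)) (g (z ^ m) + m * (z ^ m * deriv g (z ^ m))) z := by
  have hcomp : HasDerivAt (fun x => g (x ^ m)) (deriv g (z ^ m) * (m * z ^ (m - 1))) z :=
    hg.hasDerivAt.comp z (hasDerivAt_pow m z)
  refine ((hasDerivAt_id' z).fun_mul hcomp).congr_deriv ?_
  rcases m with _ | m
  · simp
  · rw [Nat.add_sub_cancel]
    ring

lemma isSe_mul_comp_pow {g : ℂ → ℂ} {m : ℕ} (hm : m ≠ 0) (hg : DifferentiableOn ℂ g unitDisk)
    (hg_zero : g 0 = 1)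
    (hlt : ∀ w ∈ unitDisk, m * ‖w * deriv g w‖ < (1 - Real.exp (-1)) * ‖g w‖) :
    IsSe (fun z => z * g (z ^ m)) := by
  have hderiv : ∀ z ∈ unitDisk, HasDerivAt (fun x => x * g (x ^ m))
      (g (z ^ m) + m * (z ^ m * deriv g (z ^ m))) z := fun z hz =>
    hasDerivAt_mul_comp_pow (hg.differentiableAt
      (isOpen_unitDisk.mem_nhds (pow_mem_unitDisk hz hm)))
  refine ⟨?_, zero_mul _, ?_, ?_⟩
  · exact DifferentiableOn.analyticOnNhd
      (fun z hz => (hderiv z hz).differentiableAt.differentiableWithinAt) isOpen_unitDisk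
  · rw [(hderiv 0 (mem_unitDisk.mpr (by simp))).deriv, zero_pow hm, hg_zero, zero_mul, mul_zero,
      add_zero]
  · rintro z ⟨hz, hz_ne : z ≠ 0⟩
    have hw := hlt (z ^ m) (pow_mem_unitDisk hz hm)
    have hg_ne : g (z ^ m) ≠ 0 := fun h0 => by
      rw [h0, norm_zero, mul_zero] at hw
      exact hw.not_ge (by positivity)
    refine ⟨mul_ne_zero hz_ne hg_ne, ?_⟩
    have hquot : z * deriv (fun x => x * g (x ^ m)) z / (z * g (z ^ m))
        = 1 + m * (z ^ m * deriv g (z ^ m)) / g (z ^ m) := by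
      rw [(hderiv z hz).deriv, mul_div_mul_left _ _ hz_ne, add_div, div_self hg_ne]
    rw [hquot]
    refine one_add_mem_expD ?_
    rwa [norm_div, norm_mul, norm_natCast, div_lt_iff₀ (norm_pos_iff.mpr hg_ne)]

section PowerSeries

variable {a : ℕ → ℂ} {u : ℕ → ℝ} {A B : ℝ} {w : ℂ}

lemma norm_mul_pow_le (hau : ∀ n, ‖a n‖ ≤ u n) (hw : w ∈ unitDisk) (n : ℕ) :
    ‖a n * w ^ n‖ ≤ u n := by
  rw [norm_mul, norm_pow]
  exact (mul_le_of_le_one_right (norm_nonneg _)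
    (pow_le_one₀ (norm_nonneg w) (mem_unitDisk.mp hw).le)).trans (hau n)

lemma differentiableOn_tsum_mul_pow (hau : ∀ n, ‖a n‖ ≤ u n) (hu : Summable u) :
    DifferentiableOn ℂ (fun x => ∑' n, a n * x ^ n) unitDisk :=
  differentiableOn_tsum_of_summable_norm hu (fun n => by fun_prop) isOpen_unitDisk
    fun n _ hx => norm_mul_pow_le hau hx n

lemma hasSum_mul_deriv_tsum_mul_pow (hau : ∀ n, ‖a n‖ ≤ u n) (hu : Summable u)
    (hw : w ∈ unitDisk) :
    HasSum (fun n : ℕ => n * a n * w ^ n) (w * deriv (fun x => ∑' n, a n * x ^ n) w) := by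
  have hderiv := hasSum_deriv_of_summable_norm (F := fun n x => a n * x ^ n) hu
    (fun n => by fun_prop) isOpen_unitDisk (fun n _ hx => norm_mul_pow_le hau hx n) hw
  refine (hderiv.mul_left w).congr_fun fun n => ?_
  rw [deriv_const_mul_field, deriv_pow_field]
  rcases n with _ | n
  · simp
  · rw [Nat.add_sub_cancel]
    ring

lemma norm_mul_deriv_tsum_mul_pow_le (hau : ∀ n, ‖a n‖ ≤ u n) (hu : Summable u)
    (hB : HasSum (fun n : ℕ => n * u n) B) (hw : w ∈ unitDisk) :
    ‖w * deriv (fun x => ∑' n, a n * x ^ n) w‖ ≤ B := by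
  refine (hasSum_mul_deriv_tsum_mul_pow hau hu hw).norm_le_of_bounded hB fun n => ?_
  rw [mul_assoc, norm_mul, norm_natCast]
  exact mul_le_mul_of_nonneg_left (norm_mul_pow_le hau hw n) n.cast_nonneg

lemma two_sub_le_norm_tsum_mul_pow (ha_zero : a 0 = 1) (hau : ∀ n, ‖a n‖ ≤ u n)
    (hA : HasSum u A) (hw : w ∈ unitDisk) : 2 - A ≤ ‖∑' n, a n * w ^ n‖ := by
  have hsum : HasSum (fun n => a n * w ^ n) (∑' n, a n * w ^ n) :=
    (Summable.of_norm_bounded hA.summable (norm_mul_pow_le hau hw)).hasSum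
  have htail : ‖∑' n, a n * w ^ n - 1‖ ≤ A - u 0 := by
    simpa [ha_zero] using ((hasSum_nat_add_iff' 1).mpr hsum).norm_le_of_bounded
      ((hasSum_nat_add_iff' 1).mpr hA) fun n => norm_mul_pow_le hau hw (n + 1)
  have hu_zero : 1 ≤ u 0 := by simpa [ha_zero] using hau 0
  have hrev := norm_sub_norm_le 1 (∑' n, a n * w ^ n)
  rw [norm_one, norm_sub_rev] at hrev
  linarith

lemma isSe_mul_tsum_mul_pow_pow {m : ℕ} (hm : m ≠ 0) (ha_zero : a 0 = 1)
    (hau : ∀ n, ‖a n‖ ≤ u n) (hA : HasSum u A) (hB : HasSum (fun n : ℕ => n * u n) B)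
    (hAB : m * B < (1 - Real.exp (-1)) * (2 - A)) :
    IsSe (fun z => z * ∑' n, a n * (z ^ m) ^ n) := by
  refine isSe_mul_comp_pow (g := fun w => ∑' n, a n * w ^ n) hm
    (differentiableOn_tsum_mul_pow hau hA.summable) ?_ fun w hw => ?_
  · rw [tsum_eq_single 0 fun n hn => by rw [zero_pow hn, mul_zero], ha_zero, pow_zero, mul_one]
  · have hexp_nonneg : 0 ≤ 1 - Real.exp (-1) :=
        sub_nonneg.mpr (Real.exp_le_one_iff.mpr (by norm_num))
    calc m * ‖w * deriv (fun x => ∑' n, a n * x ^ n) w‖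
        ≤ m * B := by gcongr; exact norm_mul_deriv_tsum_mul_pow_le hau hA.summable hB hw
      _ < (1 - Real.exp (-1)) * (2 - A) := hAB
      _ ≤ (1 - Real.exp (-1)) * ‖∑' n, a n * w ^ n‖ := by
          gcongr; exact two_sub_le_norm_tsum_mul_pow ha_zero hau hA hw

end PowerSeries

lemma hasSum_pow_div_factorial (q : ℝ) :
    HasSum (fun n : ℕ => q ^ n / n.factorial) (Real.exp q) := by
  rw [Real.exp_eq_exp_ℝ]
  exact NormedSpace.expSeries_div_hasSum_exp q

lemma hasSum_nat_mul_pow_div_factorial (q : ℝ) :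
    HasSum (fun n : ℕ => n * (q ^ n / n.factorial)) (q * Real.exp q) := by
  rw [← hasSum_nat_add_iff' 1]
  convert! (hasSum_pow_div_factorial q).mul_left q using 1
  · funext n
    rw [Nat.factorial_succ]
    push_cast
    field_simp
    ring
  · simp

section Bessel

variable {κ : ℂ}

lemma norm_le_norm_add_natCast (hκ : -1 / 2 ≤ κ.re) (n : ℕ) : ‖κ‖ ≤ ‖κ + n‖ := by
  have hn : 0 ≤ (n : ℝ) * (n + 2 * κ.re) := by
    rcases n.eq_zero_or_pos with rfl | hpos
    · simp
    · have : (1 : ℝ) ≤ n := by exact_mod_cast hpos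
      exact mul_nonneg n.cast_nonneg (by linarith)
  refine le_of_sq_le_sq ?_ (norm_nonneg _)
  simp only [Complex.sq_norm, normSq_apply, add_re, natCast_re, add_im, natCast_im, add_zero]
  linarith

lemma norm_pow_le_norm_ascPochhammer_eval (hκ : -1 / 2 ≤ κ.re) (n : ℕ) :
    ‖κ‖ ^ n ≤ ‖(ascPochhammer ℂ n).eval κ‖ := by
  induction n with
  | zero => simp
  | succ n ih =>
    rw [ascPochhammer_succ_eval, norm_mul, pow_succ]
    gcongr
    exact norm_le_norm_add_natCast hκ n

lemma norm_besselPhi_coeff_le (hκ_ne : κ ≠ 0) (hκ : -1 / 2 ≤ κ.re) (c : ℂ) (n : ℕ) :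
    ‖(-c / 4) ^ n / ((ascPochhammer ℂ n).eval κ * (n.factorial : ℂ))‖
      ≤ (‖c‖ / (4 * ‖κ‖)) ^ n / n.factorial := by
  calc ‖(-c / 4) ^ n / ((ascPochhammer ℂ n).eval κ * (n.factorial : ℂ))‖
      = (‖c‖ / 4) ^ n / (‖(ascPochhammer ℂ n).eval κ‖ * n.factorial) := by simp
    _ ≤ (‖c‖ / 4) ^ n / (‖κ‖ ^ n * n.factorial) := by
        gcongr
        exact norm_pow_le_norm_ascPochhammer_eval hκ n
    _ = (‖c‖ / (4 * ‖κ‖)) ^ n / n.factorial := by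
        rw [← div_div, ← div_pow, div_div]

lemma isSe_mul_besselPhi_pow (hκ_ne : κ ≠ 0) (hκ : -1 / 2 ≤ κ.re) {c : ℂ} {q : ℝ}
    (hc : ‖c‖ ≤ 4 * q * ‖κ‖) {m : ℕ} (hm : m ≠ 0)
    (hq : m * (q * Real.exp q) < (1 - Real.exp (-1)) * (2 - Real.exp q)) :
    IsSe (fun z => z * besselPhi κ c (z ^ m)) := by
  have hc_div : ‖c‖ / (4 * ‖κ‖) ≤ q := (div_le_iff₀ (by positivity)).mpr (by linarith)
  refine isSe_mul_tsum_mul_pow_pow hm (by simp) (fun n => ?_) (hasSum_pow_div_factorial q)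
    (hasSum_nat_mul_pow_div_factorial q) hq
  calc ‖(-c / 4) ^ n / ((ascPochhammer ℂ n).eval κ * (n.factorial : ℂ))‖
      ≤ (‖c‖ / (4 * ‖κ‖)) ^ n / n.factorial := norm_besselPhi_coeff_le hκ_ne hκ c n
    _ ≤ q ^ n / n.factorial := by gcongr

end Bessel

lemma exp_one_fifth_lt : Real.exp (1 / 5) < 1.2215 := by
  refine lt_of_pow_lt_pow_left₀ 5 (by norm_num) ?_
  rw [← Real.exp_nat_mul]
  norm_num
  linarith [Real.exp_one_lt_d9]

theorem bessel_modifiedBessel_sq_exponential_starlike_general {κ c : ℂ} (hκ_ne : κ ≠ 0)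
    (hκ : -1 / 2 ≤ κ.re) (hc : ‖c‖ ≤ 4 / 5 * ‖κ‖) :
    IsSe (fun z => z * besselPhi κ c (z ^ 2)) := by
  -- `1 / 5` is just below the root of `2 q e^q = (1 - e⁻¹) (2 - e^q)`.
  refine isSe_mul_besselPhi_pow (q := 1 / 5) hκ_ne hκ (by linarith) two_ne_zero ?_
  have hfifth := exp_one_fifth_lt
  have hneg_one : Real.exp (-1) < 0.368 := Real.exp_neg_one_lt_d9.trans (by norm_num)
  calc ((2 : ℕ) : ℝ) * (1 / 5 * Real.exp (1 / 5)) ≤ (1 - 0.368) * (2 - 1.2215) := by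
        push_cast
        linarith
    _ < (1 - Real.exp (-1)) * (2 - Real.exp (1 / 5)) := by gcongr

theorem bessel_modifiedBessel_sq_exponential_starlike (ν : ℝ) (h : 17 / 12 ≤ ν) :
    IsSe (fun z => z * besselPhi ((ν : ℂ) + 1) 1 (z ^ 2)) ∧
      IsSe (fun z => z * besselPhi ((ν : ℂ) + 1) (-1) (z ^ 2)) := by
  have hre : 29 / 12 ≤ ((ν : ℂ) + 1).re := by
    rw [add_re, ofReal_re, one_re]
    linarith
  have hnorm : 29 / 12 ≤ ‖(ν : ℂ) + 1‖ := hre.trans (re_le_norm _)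
  have hne : (ν : ℂ) + 1 ≠ 0 := norm_pos_iff.mp (by linarith)
  constructor <;>
    exact bessel_modifiedBessel_sq_exponential_starlike_general hne (by linarith)
      (by simp only [norm_neg, norm_one]; linarith)
end
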